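/- Fix an odd integer p ≥ 5, let R > 0, and let u : ℝ × (0,∞) → ℝ be C^∞ on {(t,r) : r > R + |t|}, satisfying ∂_t²u − ∂_r²u − (3/r)∂_r u = |u|^{p−1}u there, with data (u(0,·), ∂_t u(0,·)) = (0, u₁) on (R,∞) where u₁ ∈ L²(R). Assume that the quantities ‖u‖_{L²L⁸(R)}, ‖u‖_{L³L⁶(R)}, ‖∂_t u‖_{L³L⁶(R)}, and sup_{t∈ℝ} ‖(u(t,·), ∂_t u(t,·))‖_{H(R+|t|)} are finite, and that the exterior energy of u vanishes. Then u(t, r) = 0 for all t ∈ ℝ and all r > R + |t|. -/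

import Mathlib

open MeasureTheory Filter Set
open scoped ENNReal

/-- The exterior energy norm `‖(v,w)‖_{H(R)} = (∫_R^∞ (|v'|² + |w|²) r³ dr)^{1/2}`. -/
noncomputable def eH (R : ℝ) (v w : ℝ → ℝ) : ℝ≥0∞ :=
  ((∫⁻ r in Ioi R, ENNReal.ofReal ((deriv v r) ^ 2 * r ^ 3)) +
      ∫⁻ r in Ioi R, ENNReal.ofReal ((w r) ^ 2 * r ^ 3)) ^ (1 / 2 : ℝ)

/-- The exterior spacetime norm `‖u‖_{L^aL^b(R)}` over the region `{r > R + |t|}`. -/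
noncomputable def eLL (a b R : ℝ) (u : ℝ → ℝ → ℝ) : ℝ≥0∞ :=
  (∫⁻ t : ℝ,
      (∫⁻ r in Ioi (R + |t|), ENNReal.ofReal (|u t r| ^ b * r ^ 3)) ^ (a / b)) ^ (1 / a)

/-- The time derivative `∂_t u` of a function of `(t,r)`. -/
noncomputable def dtu (u : ℝ → ℝ → ℝ) (t r : ℝ) : ℝ := deriv (fun s => u s r) t

/-- `u` is an exterior solution of `∂_t²u - ∂_r²u - (3/r)∂_r u = |u|^{p-1}u`
on `{r > R + |t|}`, of smoothness class `C^n`. -/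
def IsExtSol (p : ℕ) (n : ℕ∞) (R : ℝ) (u : ℝ → ℝ → ℝ) : Prop :=
  ContDiffOn ℝ n (fun q : ℝ × ℝ => u q.1 q.2) {q : ℝ × ℝ | R + |q.1| < q.2} ∧
  ∀ t r : ℝ, R + |t| < r →
    deriv (fun s => dtu u s r) t - deriv (deriv (u t)) r - (3 / r) * deriv (u t) r
      = |u t r| ^ (p - 1) * u t r

/-- The exterior energy of `u` outside `{r > R + |t|}` vanishes as `t → ±∞`. -/
def ExtEnergyVanishes (R : ℝ) (u : ℝ → ℝ → ℝ) : Prop :=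
  Tendsto (fun t : ℝ => ∫ r in Ioi (R + |t|),
      ((dtu u t r) ^ 2 + (deriv (u t) r) ^ 2) * r ^ 3) atTop (nhds 0) ∧
  Tendsto (fun t : ℝ => ∫ r in Ioi (R + |t|),
      ((dtu u t r) ^ 2 + (deriv (u t) r) ^ 2) * r ^ 3) atBot (nhds 0)

/-- `sup_{t∈ℝ} ‖(u(t,·), ∂_t u(t,·))‖_{H(R+|t|)}`. -/
noncomputable def supH (R : ℝ) (u : ℝ → ℝ → ℝ) : ℝ≥0∞ :=
  ⨆ t : ℝ, eH (R + |t|) (u t) (fun r => dtu u t r)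

open scoped ContDiff Topology

def Om (R : ℝ) : Set (ℝ × ℝ) := {q : ℝ × ℝ | R + |q.1| < q.2}

lemma isOpen_Om (R : ℝ) : IsOpen (Om R) := by
  unfold Om
  exact isOpen_lt (by fun_prop) (by fun_prop)

noncomputable def dru (u : ℝ → ℝ → ℝ) (t r : ℝ) : ℝ := deriv (u t) r

def Sm (R : ℝ) (f : ℝ → ℝ → ℝ) : Prop :=
  ContDiffOn ℝ ∞ (fun q : ℝ × ℝ => f q.1 q.2) (Om R)

lemma Sm.chain {R : ℝ} {f : ℝ → ℝ → ℝ} (hf : Sm R f) {x y : ℝ → ℝ} {x' y' s : ℝ}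
    (hx : HasDerivAt x x' s) (hy : HasDerivAt y y' s) (h : R + |x s| < y s) :
    HasDerivAt (fun s => f (x s) (y s))
      (fderiv ℝ (fun q : ℝ × ℝ => f q.1 q.2) (x s, y s) (x', y')) s := by
  have h1 : HasFDerivAt (fun q : ℝ × ℝ => f q.1 q.2)
      (fderiv ℝ (fun q : ℝ × ℝ => f q.1 q.2) (x s, y s)) (x s, y s) := by
    apply DifferentiableAt.hasFDerivAt
    exact (hf.contDiffAt ((isOpen_Om R).mem_nhds h)).differentiableAt (by simp)
  exact h1.comp_hasDerivAt s (hx.prodMk hy)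

lemma Sm.dtu_eq {R : ℝ} {f : ℝ → ℝ → ℝ} (hf : Sm R f) {t r : ℝ} (h : R + |t| < r) :
    dtu f t r = fderiv ℝ (fun q : ℝ × ℝ => f q.1 q.2) (t, r) (1, 0) :=
  (hf.chain (hasDerivAt_id t) (hasDerivAt_const t r) h).deriv

lemma Sm.dru_eq {R : ℝ} {f : ℝ → ℝ → ℝ} (hf : Sm R f) {t r : ℝ} (h : R + |t| < r) :
    dru f t r = fderiv ℝ (fun q : ℝ × ℝ => f q.1 q.2) (t, r) (0, 1) :=
  (hf.chain (hasDerivAt_const r t) (hasDerivAt_id r) h).deriv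

lemma Sm.chain' {R : ℝ} {f : ℝ → ℝ → ℝ} (hf : Sm R f) {x y : ℝ → ℝ} {x' y' s : ℝ}
    (hx : HasDerivAt x x' s) (hy : HasDerivAt y y' s) (h : R + |x s| < y s) :
    HasDerivAt (fun s => f (x s) (y s))
      (x' * dtu f (x s) (y s) + y' * dru f (x s) (y s)) s := by
  have := hf.chain hx hy h
  convert this using 1
  rw [hf.dtu_eq h, hf.dru_eq h]
  have e : ((x', y') : ℝ × ℝ) = x' • ((1:ℝ), (0:ℝ)) + y' • ((0:ℝ), (1:ℝ)) := by
    simp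
  rw [e, map_add, map_smul, map_smul]; simp

lemma Sm.fd {R : ℝ} {f : ℝ → ℝ → ℝ} (hf : Sm R f) (v : ℝ × ℝ) :
    ContDiffOn ℝ ∞ (fun q => fderiv ℝ (fun q : ℝ × ℝ => f q.1 q.2) q v) (Om R) := by
  have := hf.fderiv_of_isOpen (isOpen_Om R) (m := ∞) (by simp)
  exact this.clm_apply contDiffOn_const

lemma Sm.dtu {R : ℝ} {f : ℝ → ℝ → ℝ} (hf : Sm R f) : Sm R (dtu f) :=
  (hf.fd (1, 0)).congr fun _ hq => hf.dtu_eq hq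

lemma Sm.dru {R : ℝ} {f : ℝ → ℝ → ℝ} (hf : Sm R f) : Sm R (dru f) :=
  (hf.fd (0, 1)).congr fun _ hq => hf.dru_eq hq

lemma Sm.comm {R : ℝ} {f : ℝ → ℝ → ℝ} (hf : Sm R f) {t r : ℝ} (h : R + |t| < r) :
    _root_.dtu (_root_.dru f) t r = _root_.dru (_root_.dtu f) t r := by
  have hmem : Om R ∈ 𝓝 (t, r) := (isOpen_Om R).mem_nhds h
  rw [hf.dru.dtu_eq h, hf.dtu.dru_eq h]
  have e1 : (fun q : ℝ × ℝ => _root_.dru f q.1 q.2) =ᶠ[𝓝 (t, r)]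
      fun q => fderiv ℝ (fun q : ℝ × ℝ => f q.1 q.2) q (0, 1) := by
    filter_upwards [hmem] with q hq using hf.dru_eq hq
  have e2 : (fun q : ℝ × ℝ => _root_.dtu f q.1 q.2) =ᶠ[𝓝 (t, r)]
      fun q => fderiv ℝ (fun q : ℝ × ℝ => f q.1 q.2) q (1, 0) := by
    filter_upwards [hmem] with q hq using hf.dtu_eq hq
  rw [e1.fderiv_eq, e2.fderiv_eq]
  have hc : ContDiffAt ℝ ∞ (fun q : ℝ × ℝ => f q.1 q.2) (t, r) := hf.contDiffAt hmem
  have hd : DifferentiableAt ℝ (fderiv ℝ (fun q : ℝ × ℝ => f q.1 q.2)) (t, r) :=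
    (hc.fderiv_right (m := 1) (by norm_cast)).differentiableAt (by simp)
  have hs := hc.isSymmSndFDerivAt (by simp; norm_cast)
  rw [fderiv_clm_apply hd (by fun_prop), fderiv_clm_apply hd (by fun_prop)]
  simpa using hs (1, 0) (0, 1)

def Wave (R : ℝ) (f g : ℝ → ℝ → ℝ) : Prop :=
  ∀ t r : ℝ, R + |t| < r →
    dtu (dtu f) t r - dru (dru f) t r - (3 / r) * dru f t r = g t r

lemma near_t {R t r : ℝ} (h : R + |t| < r) : ∀ᶠ s in 𝓝 t, R + |s| < r :=
  (isOpen_lt (f := fun s : ℝ => R + |s|) (g := fun _ => r) (by fun_prop) (by fun_prop)).mem_nhds h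

lemma near_r {R t r : ℝ} (h : R + |t| < r) : ∀ᶠ s in 𝓝 r, R + |t| < s :=
  lt_mem_nhds h

lemma Sm.has_t {R : ℝ} {f : ℝ → ℝ → ℝ} (hf : Sm R f) {t r : ℝ} (h : R + |t| < r) :
    HasDerivAt (fun s => f s r) (_root_.dtu f t r) t := by
  simpa using hf.chain' (hasDerivAt_id t) (hasDerivAt_const t r) h

lemma Sm.has_r {R : ℝ} {f : ℝ → ℝ → ℝ} (hf : Sm R f) {t r : ℝ} (h : R + |t| < r) :
    HasDerivAt (fun s => f t s) (_root_.dru f t r) r := by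
  simpa using hf.chain' (hasDerivAt_const r t) (hasDerivAt_id r) h

lemma Wave.dt {R : ℝ} {f : ℝ → ℝ → ℝ} {p : ℕ} (hf : Sm R f)
    (hw : Wave R f (fun t r => (f t r) ^ p)) :
    Wave R (dtu f) (fun t r => p * (f t r) ^ (p - 1) * dtu f t r) := by
  intro t r h
  have e : (fun s => dtu (dtu f) s r - dru (dru f) s r - (3 / r) * dru f s r) =ᶠ[𝓝 t]
      fun s => (f s r) ^ p := by
    filter_upwards [near_t h] with s hs using hw s r hs
  have d := e.deriv_eq
  have d1 : HasDerivAt (fun s => (f s r) ^ p) (p * (f t r) ^ (p - 1) * dtu f t r) t :=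
    (hf.has_t h).pow p
  have d2 := ((hf.dtu.dtu.has_t h).sub (hf.dru.dru.has_t h)).sub
    ((hf.dru.has_t h).const_mul (3 / r))
  have d3 := d2.deriv
  have c1 : dtu (dru (dru f)) t r = dru (dru (dtu f)) t r := by
    rw [hf.dru.comm h]
    apply Filter.EventuallyEq.deriv_eq
    filter_upwards [near_r h] with s hs using hf.comm hs
  have c2 : dtu (dru f) t r = dru (dtu f) t r := hf.comm h
  rw [c1, c2] at d3
  change _ = p * (f t r) ^ (p - 1) * dtu f t r
  rw [← d1.deriv, ← d]
  exact d3.symm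

noncomputable def AA (f : ℝ → ℝ → ℝ) (t r : ℝ) : ℝ :=
  r * √r * (dru f t r - dtu f t r) + (3 / 2) * √r * f t r

lemma pos_r {R t r : ℝ} (hR : 0 < R) (h : R + |t| < r) : 0 < r := by
  have := abs_nonneg t; linarith

lemma AA_has {R : ℝ} (hR : 0 < R) {f g : ℝ → ℝ → ℝ} (hf : Sm R f) (hw : Wave R f g) {t r s : ℝ}
    (h : R + |t + s| < r + s) :
    HasDerivAt (fun b => AA f (t + b) (r + b))
      ((3 / 4) / √(r + s) * f (t + s) (r + s) - (r + s) * √(r + s) * g (t + s) (r + s)) s := by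
  have hr := pos_r hR h
  have hx : HasDerivAt (fun b => t + b) 1 s := (hasDerivAt_id s).const_add t
  have hy : HasDerivAt (fun b => r + b) 1 s := (hasDerivAt_id s).const_add r
  have hq := hy.sqrt hr.ne'
  have this : HasDerivAt (fun b => AA f (t + b) (r + b)) _ s := ((hy.mul hq).mul ((hf.dru.chain' hx hy h).sub (hf.dtu.chain' hx hy h))).add
    ((hq.const_mul (3/2)).mul (hf.chain' hx hy h))
  refine this.congr_deriv ?_
  rw [hf.comm h, ← hw _ _ h]
  have hs : 0 < √(r + s) := Real.sqrt_pos.2 hr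
  have e2 : r + s = √(r + s) ^ 2 := (Real.sq_sqrt hr.le).symm
  simp only [Pi.mul_apply, Pi.sub_apply]
  generalize _root_.dtu (_root_.dtu f) (t + s) (r + s) = a1
  generalize _root_.dru (_root_.dru f) (t + s) (r + s) = a2
  generalize _root_.dru (_root_.dtu f) (t + s) (r + s) = a3
  generalize _root_.dru f (t + s) (r + s) = a4
  generalize _root_.dtu f (t + s) (r + s) = a5
  generalize f (t + s) (r + s) = a6
  generalize hQ : √(r + s) = Q at *
  rw [e2]
  field_simp
  try ring

lemma phi_has {R : ℝ} (hR : 0 < R) {f : ℝ → ℝ → ℝ} (hf : Sm R f) {t r s : ℝ}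
    (h : R + |t - s| < r + s) :
    HasDerivAt (fun a => (r + a) * √(r + a) * f (t - a) (r + a)) (AA f (t - s) (r + s)) s := by
  have hr := pos_r hR h
  have hx : HasDerivAt (fun b => t - b) (-1) s := (hasDerivAt_id s).const_sub t
  have hy : HasDerivAt (fun b => r + b) 1 s := (hasDerivAt_id s).const_add r
  have hq := hy.sqrt hr.ne'
  have this : HasDerivAt (fun a => (r + a) * √(r + a) * f (t - a) (r + a)) _ s :=
    (hy.mul hq).mul (hf.chain' hx hy h)
  refine this.congr_deriv ?_
  have hs : 0 < √(r + s) := Real.sqrt_pos.2 hr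
  have e2 : r + s = √(r + s) ^ 2 := (Real.sq_sqrt hr.le).symm
  simp only [AA, Pi.mul_apply]
  generalize _root_.dru f (t - s) (r + s) = a4
  generalize _root_.dtu f (t - s) (r + s) = a5
  generalize f (t - s) (r + s) = a6
  generalize hQ : √(r + s) = Q at *
  rw [e2]
  field_simp
  try ring

lemma ray_mem {R t r s : ℝ} (h : R + |t| < r) (hs : 0 ≤ s) : R + |t + s| < r + s := by
  have := abs_add_le t s
  rw [abs_of_nonneg hs] at this
  linarith

lemma ray_mem' {R t r s : ℝ} (h : R + |t| < r) (hs : 0 ≤ s) : R + |t - s| < r + s := by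
  have := abs_sub t s
  rw [abs_of_nonneg hs] at this
  linarith

lemma ray_bound {R : ℝ} (hR : 0 < R) {f g : ℝ → ℝ → ℝ} (hf : Sm R f) (hw : Wave R f g)
    {L r₀ : ℝ}
    (hL : ∀ t r : ℝ, R + |t| < r → r₀ ≤ r →
      |(3 / 4) / √r * f t r - r * √r * g t r| ≤ L / (r * √r))
    {t r : ℝ} (h : R + |t| < r) (h0 : r₀ ≤ r) {s : ℝ} (hs : 0 ≤ s) :
    |AA f (t + s) (r + s) - AA f t r| ≤ 2 * L / √r - 2 * L / √(r + s) := by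
  have hr := pos_r hR h
  have key : ∀ x ∈ Icc (0:ℝ) s,
      HasDerivAt (fun b => AA f (t + b) (r + b) - AA f t r)
      ((3 / 4) / √(r + x) * f (t + x) (r + x) - (r + x) * √(r + x) * g (t + x) (r + x)) x :=
    fun x hx => (AA_has hR hf hw (ray_mem h hx.1)).sub_const _
  have hB : ∀ x : ℝ, 0 ≤ x →
      HasDerivAt (fun b => 2 * L / √r - 2 * L / √(r + b)) (L / ((r + x) * √(r + x))) x := by
    intro x hx
    have hrx : 0 < r + x := by linarith
    have hy : HasDerivAt (fun b => r + b) 1 x := (hasDerivAt_id x).const_add r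
    have hq := hy.sqrt hrx.ne'
    have hsq : 0 < √(r + x) := Real.sqrt_pos.2 hrx
    have := ((hasDerivAt_const x (2 * L)).fun_div hq hsq.ne').const_sub (2 * L / √r)
    refine this.congr_deriv ?_
    have e2 : r + x = √(r + x) ^ 2 := (Real.sq_sqrt hrx.le).symm
    generalize hQ : √(r + x) = Q at *
    rw [e2]
    field_simp
    try ring
  have := image_norm_le_of_norm_deriv_right_le_deriv_boundary'
    (f := fun b => AA f (t + b) (r + b) - AA f t r) (a := 0) (b := s)
    (fun x hx => (key x hx).continuousAt.continuousWithinAt)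
    (fun x hx => (key x ⟨hx.1, hx.2.le⟩).hasDerivWithinAt)
    (B := fun b => 2 * L / √r - 2 * L / √(r + b))
    (B' := fun x => L / ((r + x) * √(r + x)))
    (by simp)
    (fun x hx => (hB x hx.1).continuousAt.continuousWithinAt)
    (fun x hx => (hB x hx.1).hasDerivWithinAt)
    (fun x hx => by
      rw [Real.norm_eq_abs]
      exact hL _ _ (ray_mem h hx.1) (by linarith [hx.1]))
    (x := s) ⟨hs, le_rfl⟩
  simpa using this

lemma AA_bound {R : ℝ} (hR : 0 < R) {f g : ℝ → ℝ → ℝ} (hf : Sm R f) (hw : Wave R f g)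
    {L r₀ C : ℝ} (hL0 : 0 ≤ L) (hC0 : 0 ≤ C)
    (hL : ∀ t r : ℝ, R + |t| < r → r₀ ≤ r →
      |(3 / 4) / √r * f t r - r * √r * g t r| ≤ L / (r * √r))
    (hC : ∀ t r : ℝ, R + |t| < r → |f t r| ≤ C / r)
    (hE : ∀ t : ℝ, IntegrableOn (fun r => ((dtu f t r) ^ 2 + (dru f t r) ^ 2) * r ^ 3)
      (Ioi (R + |t|)))
    (hv : Tendsto (fun t : ℝ => ∫ r in Ioi (R + |t|),
      ((dtu f t r) ^ 2 + (dru f t r) ^ 2) * r ^ 3) atTop (𝓝 0))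
    {t r : ℝ} (h : R + |t| < r) (h0 : r₀ ≤ r) :
    |AA f t r| ≤ 2 * L / √r := by
  by_contra hcon
  push Not at hcon
  have hr := pos_r hR h
  -- continuity
  have hcont : ContinuousAt (fun a => |AA f (t - a) (r + a)| - 2 * L / √(r + a)) 0 := by
    have hx : HasDerivAt (fun b => t - b) (-1) 0 := (hasDerivAt_id 0).const_sub t
    have hy : HasDerivAt (fun b => r + b) 1 0 := (hasDerivAt_id 0).const_add r
    have hm : R + |t - 0| < r + 0 := by simpa using h
    have c1 : ContinuousAt (fun a => f (t - a) (r + a)) 0 := (hf.chain' hx hy hm).continuousAt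
    have c2 : ContinuousAt (fun a => dtu f (t - a) (r + a)) 0 :=
      (hf.dtu.chain' hx hy hm).continuousAt
    have c3 : ContinuousAt (fun a => dru f (t - a) (r + a)) 0 :=
      (hf.dru.chain' hx hy hm).continuousAt
    have hq : ContinuousAt (fun a => √(r + a)) 0 := by fun_prop
    have hq0 : √(r + 0) ≠ 0 := by simpa using (Real.sqrt_pos.2 hr).ne'
    exact (ContinuousAt.abs (((hy.continuousAt.mul hq).mul (c3.sub c2)).add
      ((continuousAt_const.mul hq).mul c1))).sub (continuousAt_const.div hq hq0)
  set η := (|AA f t r| - 2 * L / √r) / 2 with hη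
  have hηpos : 0 < η := by rw [hη]; linarith
  have hev : ∀ᶠ a in 𝓝 (0:ℝ), η < |AA f (t - a) (r + a)| - 2 * L / √(r + a) := by
    apply hcont.eventually_const_lt
    simp only [sub_zero, add_zero]
    rw [hη]; linarith
  obtain ⟨δ, hδ, hball⟩ := Metric.eventually_nhds_iff.1 hev
  have hslice : ∀ T : ℝ, t ≤ T → ∀ x ∈ Icc (r - t + T) (r - t + T + δ), η ≤ |AA f T x| := by
    intro T hT x hx
    set a := (x - (r - t + T)) / 2 with ha
    have ha0 : 0 ≤ a := by rw [ha]; linarith [hx.1]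
    have ha1 : a < δ := by rw [ha]; linarith [hx.2]
    have h1 := hball (y := a) (by rw [Real.dist_eq, sub_zero, abs_of_nonneg ha0]; exact ha1)
    have h2 := ray_bound hR hf hw hL (ray_mem' h ha0) (by linarith) (s := T - t + a)
      (by linarith)
    have e1 : t - a + (T - t + a) = T := by ring
    have e2 : r + a + (T - t + a) = x := by rw [ha]; ring
    rw [e1, e2] at h2
    have h3 : 0 ≤ 2 * L / √x := by positivity
    have h4 := abs_sub_abs_le_abs_sub (AA f (t - a) (r + a)) (AA f T x)
    rw [abs_sub_comm] at h4
    linarith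
  -- lower bound for the energy
  have hlow : ∀ T : ℝ, t ≤ T → 0 ≤ T → (3 * C / η) ^ 2 ≤ T →
      δ * (η ^ 2 / 8) ≤ ∫ x in Ioi (R + |T|), ((dtu f T x) ^ 2 + (dru f T x) ^ 2) * x ^ 3 := by
    intro T hT hT0 hTC
    have hsub : Icc (r - t + T) (r - t + T + δ) ⊆ Ioi (R + |T|) := by
      intro x hx
      rw [mem_Ioi, abs_of_nonneg hT0]
      have := le_abs_self t
      linarith [hx.1]
    have h1 : ∫ x in Icc (r - t + T) (r - t + T + δ),
        ((dtu f T x) ^ 2 + (dru f T x) ^ 2) * x ^ 3 ≤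
        ∫ x in Ioi (R + |T|), ((dtu f T x) ^ 2 + (dru f T x) ^ 2) * x ^ 3 := by
      apply setIntegral_mono_set (hE T)
      · filter_upwards [ae_restrict_mem measurableSet_Ioi] with x hx
        have : 0 < x := pos_r hR hx
        simp only [Pi.zero_apply]
        positivity
      · exact hsub.eventuallyLE
    have h2 : ∫ x in Icc (r - t + T) (r - t + T + δ), (η ^ 2 / 8 : ℝ) ≤
        ∫ x in Icc (r - t + T) (r - t + T + δ),
        ((dtu f T x) ^ 2 + (dru f T x) ^ 2) * x ^ 3 := by
      apply setIntegral_mono_on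
      · simp
      · exact (hE T).mono_set hsub
      · exact measurableSet_Icc
      intro x hx
      have hxm : R + |T| < x := hsub hx
      have hx0 : 0 < x := pos_r hR hxm
      have hA := hslice T hT x hx
      have hxT : T ≤ x := by have := le_abs_self t; linarith [hx.1]
      have hs : 0 < √x := Real.sqrt_pos.2 hx0
      have hs2 : 3 * C / η ≤ √x := Real.le_sqrt_of_sq_le (hTC.trans hxT)
      have e2 : x = √x ^ 2 := (Real.sq_sqrt hx0.le).symm
      have hfx : |(3 / 2) * √x * f T x| ≤ η / 2 := by
        rw [abs_mul, abs_of_pos (by positivity : 0 < 3 / 2 * √x)]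
        calc 3 / 2 * √x * |f T x| ≤ 3 / 2 * √x * (C / x) := by
              gcongr; exact hC _ _ hxm
          _ = (3 / 2) * (C / √x) := by
              nth_rewrite 2 [e2]; field_simp
          _ ≤ η / 2 := by
              rw [div_le_iff₀ hηpos] at hs2
              have : C / √x ≤ η / 3 := by
                rw [div_le_iff₀ hs]; linarith
              linarith
      have h3 : η / 2 ≤ |x * √x * (dru f T x - dtu f T x)| := by
        have := abs_add_le (x * √x * (dru f T x - dtu f T x)) ((3 / 2) * √x * f T x)
        unfold AA at hA
        linarith
      have h4 : (η / 2) ^ 2 ≤ (x * √x * (dru f T x - dtu f T x)) ^ 2 := by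
        rw [← sq_abs (x * √x * (dru f T x - dtu f T x))]
        gcongr
      have h5 : (x * √x * (dru f T x - dtu f T x)) ^ 2 =
          x ^ 3 * (dru f T x - dtu f T x) ^ 2 := by
        rw [mul_pow, mul_pow, ← e2]; ring
      have h6 : 0 ≤ x ^ 3 * (dru f T x + dtu f T x) ^ 2 := by positivity
      rw [h5] at h4
      nlinarith
    have h3 : ∫ x in Icc (r - t + T) (r - t + T + δ), (η ^ 2 / 8 : ℝ) = δ * (η ^ 2 / 8) := by
      simp [hδ.le]
    linarith
  have hpos : 0 < δ * (η ^ 2 / 8) := by positivity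
  have hev2 := hv.eventually_lt_const hpos
  obtain ⟨T, hT1, hT2, hT3, hT4⟩ := (hev2.and ((eventually_ge_atTop t).and
    ((eventually_ge_atTop 0).and (eventually_ge_atTop ((3 * C / η) ^ 2))))).exists
  linarith [hlow T hT2 hT3 hT4]

def rev (f : ℝ → ℝ → ℝ) (t r : ℝ) : ℝ := f (-t) r

lemma dru_rev (f : ℝ → ℝ → ℝ) : dru (rev f) = rev (dru f) := rfl

lemma dtu_rev (f : ℝ → ℝ → ℝ) (t r : ℝ) : dtu (rev f) t r = - dtu f (-t) r := by
  unfold dtu rev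
  exact deriv_comp_neg (fun s => f s r) t

lemma dtu_dtu_rev (f : ℝ → ℝ → ℝ) (t r : ℝ) :
    dtu (dtu (rev f)) t r = dtu (dtu f) (-t) r := by
  have e : dtu (rev f) = fun t r => - rev (dtu f) t r := by
    funext t r; exact dtu_rev f t r
  rw [e]
  have : dtu (fun t r => - rev (dtu f) t r) t r = - dtu (rev (dtu f)) t r := by
    unfold dtu
    exact deriv.fun_neg
  rw [this, dtu_rev, neg_neg]

lemma Sm.rev {R : ℝ} {f : ℝ → ℝ → ℝ} (hf : Sm R f) : Sm R (rev f) := by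
  have h1 : ContDiff ℝ ∞ (fun q : ℝ × ℝ => (-q.1, q.2)) := by fun_prop
  exact ContDiffOn.comp hf h1.contDiffOn (fun q hq => by simpa [Om] using hq)

lemma Wave.rev {R : ℝ} {f g : ℝ → ℝ → ℝ} (hw : Wave R f g) : Wave R (rev f) (rev g) := by
  intro t r h
  have := hw (-t) r (by simpa using h)
  rw [dtu_dtu_rev]
  exact this

lemma dtu_bound {R : ℝ} (hR : 0 < R) {f g : ℝ → ℝ → ℝ} (hf : Sm R f) (hw : Wave R f g)
    {L r₀ C : ℝ} (hL0 : 0 ≤ L) (hC0 : 0 ≤ C)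
    (hL : ∀ t r : ℝ, R + |t| < r → r₀ ≤ r →
      |(3 / 4) / √r * f t r - r * √r * g t r| ≤ L / (r * √r))
    (hC : ∀ t r : ℝ, R + |t| < r → |f t r| ≤ C / r)
    (hE : ∀ t : ℝ, IntegrableOn (fun r => ((dtu f t r) ^ 2 + (dru f t r) ^ 2) * r ^ 3)
      (Ioi (R + |t|)))
    (hv : Tendsto (fun t : ℝ => ∫ r in Ioi (R + |t|),
      ((dtu f t r) ^ 2 + (dru f t r) ^ 2) * r ^ 3) atTop (𝓝 0))
    (hv' : Tendsto (fun t : ℝ => ∫ r in Ioi (R + |t|),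
      ((dtu f t r) ^ 2 + (dru f t r) ^ 2) * r ^ 3) atBot (𝓝 0))
    {t r : ℝ} (h : R + |t| < r) (h0 : r₀ ≤ r) :
    |dtu f t r| ≤ 2 * L / r ^ 2 := by
  have h1 := AA_bound hR hf hw hL0 hC0 hL hC hE hv h h0
  have h2 := AA_bound hR hf.rev hw.rev (L := L) (r₀ := r₀) hL0 hC0
    (fun t r h h0 => hL (-t) r (by simpa using h) h0)
    (fun t r h => hC (-t) r (by simpa using h))
    (fun t => by
      have := hE (-t)
      simp only [dtu_rev, neg_sq, dru_rev]
      simpa [rev] using this)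
    (by
      have := hv'.comp tendsto_neg_atTop_atBot
      simp only [dtu_rev, neg_sq, dru_rev]
      simpa [rev, Function.comp_def] using this)
    (t := -t) (by simpa using h) h0
  have hr := pos_r hR h
  have hs : 0 < √r := Real.sqrt_pos.2 hr
  have e2 : r = √r ^ 2 := (Real.sq_sqrt hr.le).symm
  have h3 : 2 * (r * √r * dtu f t r) = AA (rev f) (-t) r - AA f t r := by
    simp only [AA, dtu_rev, dru_rev]
    simp only [rev, neg_neg]
    ring
  have h4 : |2 * (r * √r * dtu f t r)| ≤ 2 * L / √r + 2 * L / √r := by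
    rw [h3]; exact (abs_sub _ _).trans (by linarith)
  rw [abs_mul, abs_mul, abs_of_pos (by positivity : 0 < r * √r), abs_two] at h4
  rw [le_div_iff₀ (by positivity)]
  have h5 : r * √r * |dtu f t r| ≤ 2 * L / √r := by linarith
  rw [le_div_iff₀ hs] at h5
  calc |dtu f t r| * r ^ 2 = r * √r * |dtu f t r| * √r := by
        linear_combination (r * |dtu f t r|) * e2
    _ ≤ _ := h5

noncomputable def ww (k r : ℝ) : ℝ := Real.exp (k / r) / √r

noncomputable def ww1 (k r : ℝ) : ℝ := - ww k r * (k / r ^ 2 + 1 / (2 * r))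

lemma ww_pos (k : ℝ) {r : ℝ} (hr : 0 < r) : 0 < ww k r :=
  div_pos (Real.exp_pos _) (Real.sqrt_pos.2 hr)

lemma ww_has (k : ℝ) {r : ℝ} (hr : 0 < r) : HasDerivAt (ww k) (ww1 k r) r := by
  have hs : 0 < √r := Real.sqrt_pos.2 hr
  have h1 : HasDerivAt (fun x : ℝ => k / x) _ r :=
    (hasDerivAt_const r k).fun_div (hasDerivAt_id r) hr.ne'
  have h2 := h1.exp
  have h3 := (hasDerivAt_id r).sqrt hr.ne'
  have : HasDerivAt (ww k) _ r := h2.fun_div h3 hs.ne'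
  refine this.congr_deriv ?_
  simp only [ww1, ww, id]
  generalize Real.exp (k / r) = E
  have e2 : r = √r ^ 2 := (Real.sq_sqrt hr.le).symm
  generalize hQ : √r = Q at *
  rw [e2]
  field_simp
  ring

lemma ww1_has (k : ℝ) {r : ℝ} (hr : 0 < r) :
    HasDerivAt (ww1 k) (ww k r * (3 / (4 * r ^ 2) + 3 * k / r ^ 3 + k ^ 2 / r ^ 4)) r := by
  have h1 := (ww_has k hr).fun_neg
  have h2 : HasDerivAt (fun x : ℝ => k / x ^ 2) _ r :=
    (hasDerivAt_const r k).fun_div ((hasDerivAt_id r).fun_pow 2) (by simpa using hr.ne')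
  have h3 : HasDerivAt (fun x : ℝ => 1 / (2 * x)) _ r :=
    (hasDerivAt_const r 1).fun_div ((hasDerivAt_id r).const_mul 2) (by simpa using hr.ne')
  have : HasDerivAt (ww1 k) _ r := h1.fun_mul (h2.fun_add h3)
  refine this.congr_deriv ?_
  simp only [ww1, id]
  generalize ww k r = E
  field_simp
  ring

lemma ww_tendsto (k : ℝ) : Tendsto (ww k) atTop (𝓝 0) := by
  have h1 : Tendsto (fun r : ℝ => Real.exp (k / r)) atTop (𝓝 (Real.exp 0)) :=
    (Real.continuous_exp.tendsto 0).comp (tendsto_const_nhds.div_atTop tendsto_id)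
  exact h1.div_atTop Real.tendsto_sqrt_atTop

lemma barrier_core {R : ℝ} (hR : 0 < R) {v P : ℝ → ℝ → ℝ} (hv : Sm R v)
    (hw : Wave R v (fun t r => P t r * v t r)) {k M : ℝ} (hk : 0 < k) (hM : 0 < M)
    {t₀ r₀ : ℝ} (h0 : R + |t₀| < r₀)
    (hP : ∀ t r : ℝ, R + |t| < r → |P t r| ≤ k ^ 2 / r ^ 4)
    (hb : ∀ a b : ℝ, 0 ≤ a → 0 ≤ b →
      |(r₀ + b + a) * √(r₀ + b + a) * v (t₀ + b - a) (r₀ + b + a)| ≤ M * ww k (r₀ + b + a))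
    (he : r₀ * √r₀ * v t₀ r₀ = M * ww k r₀) : False := by
  have hr0 := pos_r hR h0
  have hmem : ∀ a b : ℝ, 0 ≤ a → 0 ≤ b → R + |t₀ + b - a| < r₀ + b + a :=
    fun a b ha hb => ray_mem' (ray_mem h0 hb) ha
  set ζ : ℝ → ℝ → ℝ := fun a b =>
    M * ww k (r₀ + b + a) - (r₀ + b + a) * √(r₀ + b + a) * v (t₀ + b - a) (r₀ + b + a) with hζ
  set Z : ℝ → ℝ → ℝ := fun a b =>
    M * ww1 k (r₀ + b + a) - AA v (t₀ + b - a) (r₀ + b + a) with hZ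
  have d1 : ∀ a b : ℝ, 0 ≤ a → 0 ≤ b → HasDerivAt (fun a => ζ a b) (Z a b) a := by
    intro a b ha hb
    have hr := pos_r hR (hmem a b ha hb)
    have i1 : HasDerivAt (fun a => r₀ + b + a) 1 a := (hasDerivAt_id a).const_add _
    have i2 := (HasDerivAt.comp a (ww_has k hr) i1).const_mul M
    have i3 := i2.fun_sub (phi_has hR hv (hmem a b ha hb))
    refine i3.congr_deriv ?_
    simp [hZ]
  have d2 : ∀ a b : ℝ, 0 ≤ a → 0 ≤ b → ∃ d, 0 < d ∧ HasDerivAt (fun b => Z a b) d b := by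
    intro a b ha hb'
    have hm := hmem a b ha hb'
    have hr := pos_r hR hm
    have hbb := hb a b ha hb'
    have i1 : HasDerivAt (fun b => r₀ + b + a) 1 b :=
      ((hasDerivAt_id b).const_add r₀).add_const a
    have i2 := (HasDerivAt.comp b (ww1_has k hr) i1).const_mul M
    have e1 : t₀ + b - a = t₀ - a + b := by ring
    have e2 : r₀ + b + a = r₀ + a + b := by ring
    have i4 := AA_has hR hv hw (t := t₀ - a) (r := r₀ + a) (s := b) (by rw [← e1, ← e2]; exact hm)
    have e3 : (fun b => AA v (t₀ - a + b) (r₀ + a + b)) =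
        fun b => AA v (t₀ + b - a) (r₀ + b + a) := by
      funext x; congr 1 <;> ring
    rw [e3] at i4
    refine ⟨_, ?_, i2.fun_sub i4⟩
    rw [← e1, ← e2]
    set r := r₀ + b + a
    set t := t₀ + b - a
    have hPP := hP t r hm
    have hs : 0 < √r := Real.sqrt_pos.2 hr
    have es : r = √r ^ 2 := (Real.sq_sqrt hr.le).symm
    have e4 : (3 / 4) / √r * v t r - r * √r * (P t r * v t r) =
        (r * √r * v t r) * (3 / (4 * r ^ 2) - P t r) := by
      generalize hQ : √r = Q at *
      rw [es]; field_simp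
    rw [e4]
    have h5 : (r * √r * v t r) * (3 / (4 * r ^ 2) - P t r) ≤
        M * ww k r * (3 / (4 * r ^ 2) + k ^ 2 / r ^ 4) := by
      refine (le_abs_self _).trans ?_
      rw [abs_mul]
      have hM0 : 0 ≤ M * ww k r := (mul_pos hM (ww_pos k hr)).le
      gcongr
      refine (abs_sub _ _).trans ?_
      rw [abs_of_pos (by positivity : 0 < 3 / (4 * r ^ 2))]
      linarith
    have h6 : 0 < M * ww k r * (3 * k / r ^ 3) := by
      have := ww_pos k hr
      positivity
    have h7 : M * (ww k r * (3 / (4 * r ^ 2) + 3 * k / r ^ 3 + k ^ 2 / r ^ 4) * 1) =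
      M * ww k r * (3 / (4 * r ^ 2) + k ^ 2 / r ^ 4) + M * ww k r * (3 * k / r ^ 3) := by ring
    rw [h7]
    linarith
  have m1 : ∀ a : ℝ, 0 ≤ a → StrictMonoOn (fun b => Z a b) (Ici 0) := by
    intro a ha
    apply strictMonoOn_of_deriv_pos (convex_Ici 0)
    · intro b hb'
      obtain ⟨d, _, hd⟩ := d2 a b ha hb'
      exact hd.continuousAt.continuousWithinAt
    · intro b hb'
      rw [interior_Ici] at hb'
      obtain ⟨d, hd0, hd⟩ := d2 a b ha (le_of_lt hb')
      rw [hd.deriv]; exact hd0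
  have m2 : ∀ b b' : ℝ, 0 ≤ b → b < b' → StrictMonoOn (fun a => ζ a b' - ζ a b) (Ici 0) := by
    intro b b' hb0 hbb
    have hb0' : 0 ≤ b' := hb0.trans hbb.le
    apply strictMonoOn_of_deriv_pos (convex_Ici 0)
    · intro a ha
      exact ((d1 a b' ha hb0').fun_sub (d1 a b ha hb0)).continuousAt.continuousWithinAt
    · intro a ha
      rw [interior_Ici] at ha
      rw [((d1 a b' (le_of_lt ha) hb0').fun_sub (d1 a b (le_of_lt ha) hb0)).deriv]
      exact sub_pos.2 (m1 a (le_of_lt ha) hb0 hb0' hbb)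
  have hz0 : ∀ a b : ℝ, 0 ≤ a → 0 ≤ b → 0 ≤ ζ a b := fun a b ha hb' =>
    sub_nonneg.2 ((le_abs_self _).trans (hb a b ha hb'))
  have hz2 : ∀ a b : ℝ, 0 ≤ a → 0 ≤ b → ζ a b ≤ 2 * M * ww k (r₀ + b + a) := fun a b ha hb' => by
    have := (neg_abs_le _).trans' (neg_le_neg (hb a b ha hb'))
    simp only [hζ]; linarith
  have hz00 : ζ 0 0 = 0 := by simp [hζ, he]
  have hc : ζ 0 1 - ζ 0 0 < ζ 1 1 - ζ 1 0 :=
    m2 0 1 le_rfl one_pos (mem_Ici.2 le_rfl) (mem_Ici.2 zero_le_one) one_pos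
  have hlow : ∀ n : ℝ, 1 < n →
      (ζ 1 1 - ζ 1 0) - (ζ 0 1 - ζ 0 0) ≤ 2 * M * ww k (r₀ + n + n) := by
    intro n hn
    have hn0 : (0:ℝ) ≤ n := by linarith
    have j1 : ζ 1 1 - ζ 1 0 < ζ n 1 - ζ n 0 :=
      m2 0 1 le_rfl one_pos (mem_Ici.2 zero_le_one) (mem_Ici.2 hn0) hn
    have j2 : ζ 0 n - ζ 0 1 < ζ n n - ζ n 1 :=
      m2 1 n zero_le_one hn (mem_Ici.2 le_rfl) (mem_Ici.2 hn0) (by linarith)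
    have j3 := hz0 0 n le_rfl hn0
    have j4 := hz0 n 0 hn0 le_rfl
    have j5 := hz2 n n hn0 hn0
    linarith
  have hlim : Tendsto (fun n : ℝ => 2 * M * ww k (r₀ + n + n)) atTop (𝓝 (2 * M * 0)) := by
    apply Tendsto.const_mul
    apply (ww_tendsto k).comp
    exact (tendsto_atTop_add_const_left _ _ tendsto_id).atTop_add_atTop tendsto_id
  have := ge_of_tendsto hlim ((eventually_gt_atTop 1).mono hlow)
  linarith

lemma barrier {R : ℝ} (hR : 0 < R) {v P : ℝ → ℝ → ℝ} (hv : Sm R v)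
    (hw : Wave R v (fun t r => P t r * v t r)) {k : ℝ} (hk : 0 < k)
    (hP : ∀ t r : ℝ, R + |t| < r → |P t r| ≤ k ^ 2 / r ^ 4)
    (hd : ∀ ε : ℝ, 0 < ε → ∃ ρ : ℝ, ∀ t r : ℝ, R + |t| < r → ρ ≤ r → r ^ 2 * |v t r| ≤ ε) :
    ∀ t r : ℝ, R + |t| < r → v t r = 0 := by
  intro t r h
  by_contra hne
  obtain ⟨R', hR1, hR2⟩ := exists_between (show R < r - |t| by linarith)
  -- ratio
  set H : ℝ × ℝ → ℝ := fun q => |q.2 * √q.2 * v q.1 q.2| / ww k q.2 with hH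
  have hr := pos_r hR h
  have hs : 0 < √r := Real.sqrt_pos.2 hr
  have hm0 : 0 < H (t, r) := by
    simp only [hH]
    have := ww_pos k hr
    have : 0 < |r * √r * v t r| := by positivity
    positivity
  obtain ⟨ρ, hρ⟩ := hd (H (t, r) / 2) (by linarith)
  set ρ' := max ρ r
  set K : Set (ℝ × ℝ) := {q | R' + |q.1| ≤ q.2 ∧ q.2 ≤ ρ'} with hK
  have hKc : IsCompact K := by
    apply Metric.isCompact_of_isClosed_isBounded
    · exact (isClosed_le (f := fun q : ℝ × ℝ => R' + |q.1|) (g := fun q : ℝ × ℝ => q.2)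
        (by fun_prop) (by fun_prop)).inter
        (isClosed_le (f := fun q : ℝ × ℝ => q.2) (g := fun _ : ℝ × ℝ => ρ')
        (by fun_prop) (by fun_prop))
    · apply (Metric.isBounded_Icc ((-ρ', -ρ') : ℝ × ℝ) (ρ', ρ')).subset
      rintro ⟨x, y⟩ ⟨h1, h2⟩
      simp only at h1 h2
      have := abs_nonneg x
      have := neg_abs_le x
      have := le_abs_self x
      exact ⟨⟨by simp only; linarith, by simp only; linarith⟩,
        ⟨by simp only; linarith, by simp only; linarith⟩⟩
  have hKO : K ⊆ Om R := fun q hq => by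
    have := hq.1
    change R + |q.1| < q.2; linarith
  have htr : (t, r) ∈ K := ⟨by simp only; linarith, le_max_right _ _⟩
  have hHc : ContinuousOn H K := by
    have c1 : ContinuousOn (fun q : ℝ × ℝ => v q.1 q.2) K := hv.continuousOn.mono hKO
    have c2 : ContinuousOn (fun q : ℝ × ℝ => ww k q.2) K := fun q hq =>
      ((ww_has k (pos_r hR (hKO hq))).continuousAt.comp (f := fun q : ℝ × ℝ => q.2)
        continuous_snd.continuousAt).continuousWithinAt
    apply ContinuousOn.div _ c2 (fun q hq => (ww_pos k (pos_r hR (hKO hq))).ne')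
    apply ContinuousOn.abs
    exact ContinuousOn.mul (by fun_prop) c1
  obtain ⟨⟨t₀, r₀⟩, hq0, hmax⟩ := hKc.exists_isMaxOn ⟨_, htr⟩ hHc
  set M := H (t₀, r₀) with hMdef
  have hM1 : H (t, r) ≤ M := hmax htr
  have hM : 0 < M := hm0.trans_le hM1
  have hall : ∀ x y : ℝ, R' + |x| ≤ y → H (x, y) ≤ M := by
    intro x y hxy
    by_cases hy : y ≤ ρ'
    · exact hmax (show (x, y) ∈ K from ⟨hxy, hy⟩)
    · push Not at hy
      have hxy' : R + |x| < y := by linarith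
      have hy0 := pos_r hR hxy'
      have h1 := hρ x y hxy' ((le_max_left _ _).trans hy.le)
      have h2 : H (x, y) ≤ y ^ 2 * |v x y| := by
        simp only [hH]
        rw [div_le_iff₀ (ww_pos k hy0), abs_mul, abs_of_pos (by
          have := Real.sqrt_pos.2 hy0
          positivity : 0 < y * √y)]
        have h3 : y * √y ≤ y ^ 2 * ww k y := by
          have h4 : 1 ≤ Real.exp (k / y) := Real.one_le_exp (by positivity)
          have hs : 0 < √y := Real.sqrt_pos.2 hy0
          have e2 : y = √y ^ 2 := (Real.sq_sqrt hy0.le).symm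
          unfold ww
          generalize Real.exp (k / y) = E at *
          have e3 : y ^ 2 * (E / √y) = y * √y * E := by
            generalize √y = Q at *
            rw [e2]; field_simp
          rw [e3]
          exact le_mul_of_one_le_right (by positivity) h4
        nlinarith [abs_nonneg (v x y)]
      linarith
  have h0 : R + |t₀| < r₀ := hKO hq0
  have hr0 := pos_r hR h0
  have hq01 : R' + |t₀| ≤ r₀ := hq0.1
  have hbd : ∀ a b : ℝ, 0 ≤ a → 0 ≤ b →
      |(r₀ + b + a) * √(r₀ + b + a) * v (t₀ + b - a) (r₀ + b + a)| ≤ M * ww k (r₀ + b + a) := by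
    intro a b ha hb
    have hin : R' + |t₀ + b - a| ≤ r₀ + b + a := by
      have h1 := abs_sub (t₀ + b) a
      have h2 := abs_add_le t₀ b
      rw [abs_of_nonneg ha] at h1
      rw [abs_of_nonneg hb] at h2
      linarith
    have := hall _ _ hin
    simp only [hH] at this
    rwa [div_le_iff₀ (ww_pos k (by linarith))] at this
  have heq : |r₀ * √r₀ * v t₀ r₀| = M * ww k r₀ := by
    rw [hMdef]; simp only [hH]
    rw [div_mul_cancel₀ _ (ww_pos k hr0).ne']
  rcases abs_choice (r₀ * √r₀ * v t₀ r₀) with hc | hc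
  · exact barrier_core hR hv hw hk hM h0 hP hbd (by rw [← heq, hc])
  · have hv' : Sm R (fun t r => - v t r) := ContDiffOn.neg hv
    have hdt : dtu (fun t r => - v t r) = fun t r => - dtu v t r := by
      funext t r; exact deriv.fun_neg
    have hdr : dru (fun t r => - v t r) = fun t r => - dru v t r := by
      funext t r; exact deriv.fun_neg
    have hdtt : dtu (fun t r => - dtu v t r) = fun t r => - dtu (dtu v) t r := by
      funext t r; exact deriv.fun_neg
    have hdrr : dru (fun t r => - dru v t r) = fun t r => - dru (dru v) t r := by
      funext t r; exact deriv.fun_neg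
    refine barrier_core hR hv' (P := P) ?_ hk hM h0 hP ?_ ?_
    · intro t r h
      have := hw t r h
      rw [hdt, hdr, hdtt, hdrr]
      simp only at this ⊢
      linarith
    · intro a b ha hb
      rw [mul_neg, abs_neg]
      exact hbd a b ha hb
    · rw [← heq, hc]; ring

lemma energy_int {R : ℝ} (hR : 0 < R) {u : ℝ → ℝ → ℝ} (hu : Sm R u) (hfin4 : supH R u < ⊤) :
    ∃ B : ℝ, 0 ≤ B ∧ ∀ t : ℝ,
      IntegrableOn (fun r => ((dtu u t r) ^ 2 + (dru u t r) ^ 2) * r ^ 3) (Ioi (R + |t|)) ∧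
      ∫ r in Ioi (R + |t|), ((dtu u t r) ^ 2 + (dru u t r) ^ 2) * r ^ 3 ≤ B := by
  refine ⟨((supH R u) ^ 2).toReal, ENNReal.toReal_nonneg, fun t => ?_⟩
  have h1 : eH (R + |t|) (u t) (fun r => dtu u t r) ≤ supH R u :=
    le_iSup (fun t : ℝ => eH (R + |t|) (u t) (fun r => dtu u t r)) t
  have c0 : ContinuousOn (fun r => (t, r)) (Ioi (R + |t|)) := by fun_prop
  have cm : MapsTo (fun r => (t, r)) (Ioi (R + |t|)) (Om R) := fun r hr => hr
  have c1 : ContinuousOn (fun r => dtu u t r) (Ioi (R + |t|)) :=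
    hu.dtu.continuousOn.comp c0 cm
  have c2 : ContinuousOn (fun r => dru u t r) (Ioi (R + |t|)) :=
    hu.dru.continuousOn.comp c0 cm
  have cE : ContinuousOn (fun r => ((dtu u t r) ^ 2 + (dru u t r) ^ 2) * r ^ 3)
      (Ioi (R + |t|)) := by fun_prop
  have cA : ContinuousOn (fun r => (dru u t r) ^ 2 * r ^ 3) (Ioi (R + |t|)) := by fun_prop
  have hA := (cA.aemeasurable (μ := volume) measurableSet_Ioi).ennreal_ofReal
  have hnn : 0 ≤ᵐ[volume.restrict (Ioi (R + |t|))]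
      fun r => ((dtu u t r) ^ 2 + (dru u t r) ^ 2) * r ^ 3 := by
    filter_upwards [ae_restrict_mem measurableSet_Ioi] with x hx
    have : 0 < x := pos_r hR hx
    simp only [Pi.zero_apply]
    positivity
  have hl : ∫⁻ r in Ioi (R + |t|), ENNReal.ofReal (((dtu u t r) ^ 2 + (dru u t r) ^ 2) * r ^ 3)
      = (∫⁻ r in Ioi (R + |t|), ENNReal.ofReal ((deriv (u t) r) ^ 2 * r ^ 3)) +
      ∫⁻ r in Ioi (R + |t|), ENNReal.ofReal ((dtu u t r) ^ 2 * r ^ 3) := by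
    refine Eq.trans ?_ (lintegral_add_left' hA _)
    apply setLIntegral_congr_fun measurableSet_Ioi
    intro x hx
    have hx0 : 0 < x := pos_r hR hx
    change ENNReal.ofReal _ = ENNReal.ofReal ((dru u t x) ^ 2 * x ^ 3) + _
    rw [← ENNReal.ofReal_add (by positivity) (by positivity)]
    congr 1; ring
  have hle : ∫⁻ r in Ioi (R + |t|),
      ENNReal.ofReal (((dtu u t r) ^ 2 + (dru u t r) ^ 2) * r ^ 3) ≤ (supH R u) ^ 2 := by
    rw [hl]
    calc _ = (eH (R + |t|) (u t) (fun r => dtu u t r)) ^ 2 := by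
          unfold eH
          rw [← ENNReal.rpow_natCast, ← ENNReal.rpow_mul]
          norm_num
      _ ≤ _ := by gcongr
  have hlt : (supH R u) ^ 2 < ⊤ := ENNReal.pow_lt_top hfin4
  have hsm := cE.aestronglyMeasurable (μ := volume) measurableSet_Ioi
  refine ⟨⟨hsm, (hasFiniteIntegral_iff_ofReal hnn).2 (hle.trans_lt hlt)⟩, ?_⟩
  rw [integral_eq_lintegral_of_nonneg_ae hnn hsm]
  exact ENNReal.toReal_mono hlt.ne hle

lemma good_dense {R : ℝ} {u : ℝ → ℝ → ℝ} (hfin1 : eLL 2 8 R u < ⊤) {a b : ℝ} (hab : a < b) :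
    ∃ t ∈ Ioo a b,
      (∫⁻ r in Ioi (R + |t|), ENNReal.ofReal (|u t r| ^ (8:ℝ) * r ^ 3)) < ⊤ := by
  by_contra hcon
  push Not at hcon
  have h1 : (∫⁻ t : ℝ,
      (∫⁻ r in Ioi (R + |t|), ENNReal.ofReal (|u t r| ^ (8:ℝ) * r ^ 3)) ^ ((2:ℝ) / 8)) = ⊤ := by
    rw [eq_top_iff]
    calc (⊤ : ℝ≥0∞) = ∫⁻ t in Ioo a b, (⊤ : ℝ≥0∞) := by
          rw [setLIntegral_const, Real.volume_Ioo, ENNReal.top_mul]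
          simpa using hab
      _ ≤ ∫⁻ t in Ioo a b,
          (∫⁻ r in Ioi (R + |t|), ENNReal.ofReal (|u t r| ^ (8:ℝ) * r ^ 3)) ^ ((2:ℝ) / 8) := by
          apply setLIntegral_mono' measurableSet_Ioo
          intro t ht
          rw [top_le_iff.1 (hcon t ht), ENNReal.top_rpow_of_pos (by norm_num)]
      _ ≤ _ := setLIntegral_le_lintegral _ _
  unfold eLL at hfin1
  rw [h1, ENNReal.top_rpow_of_pos (by norm_num)] at hfin1
  exact lt_irrefl _ hfin1

lemma point_good {R : ℝ} (hR : 0 < R) {u : ℝ → ℝ → ℝ} (hu : Sm R u) {t ε : ℝ} (hε : 0 < ε)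
    (hg : (∫⁻ r in Ioi (R + |t|), ENNReal.ofReal (|u t r| ^ (8:ℝ) * r ^ 3)) < ⊤)
    (hi : IntegrableOn (fun r => ((dtu u t r) ^ 2 + (dru u t r) ^ 2) * r ^ 3) (Ioi (R + |t|)))
    (he : ∫ r in Ioi (R + |t|), ((dtu u t r) ^ 2 + (dru u t r) ^ 2) * r ^ 3 ≤ ε ^ 2)
    {r : ℝ} (h : R + |t| < r) : |u t r| ≤ ε / r := by
  have hr := pos_r hR h
  have c0 : ContinuousOn (fun r => (t, r)) (Ioi (R + |t|)) := by fun_prop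
  have cm : MapsTo (fun r => (t, r)) (Ioi (R + |t|)) (Om R) := fun r hr => hr
  have c2 : ContinuousOn (fun r => dru u t r) (Ioi (R + |t|)) :=
    hu.dru.continuousOn.comp c0 cm
  -- increments
  have hinc : ∀ s : ℝ, r ≤ s → |u t s - u t r| ≤ ε / r := by
    intro s hs
    have hsub : Icc r s ⊆ Ioi (R + |t|) := fun x hx => lt_of_lt_of_le h hx.1
    have hsub' : Ioc r s ⊆ Ioi (R + |t|) := fun x hx => lt_trans h hx.1
    have hd : ∀ x ∈ uIcc r s, HasDerivAt (fun x => u t x) (dru u t x) x := by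
      intro x hx
      rw [uIcc_of_le hs] at hx
      exact hu.has_r (hsub hx)
    have hint : IntervalIntegrable (fun x => dru u t x) volume r s := by
      apply ContinuousOn.intervalIntegrable
      rw [uIcc_of_le hs]; exact c2.mono hsub
    rw [← intervalIntegral.integral_eq_sub_of_hasDerivAt hd hint]
    have i1 : IntervalIntegrable (fun x => ((dtu u t x) ^ 2 + (dru u t x) ^ 2) * x ^ 3)
        volume r s := by
      rw [intervalIntegrable_iff_integrableOn_Ioc_of_le hs]
      exact hi.mono_set hsub'
    have i2 : ∀ x ∈ uIcc r s, HasDerivAt (fun x : ℝ => - (1 / (2 * x ^ 2))) (1 / x ^ 3) x := by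
      intro x hx
      rw [uIcc_of_le hs] at hx
      have hx0 : 0 < x := hr.trans_le hx.1
      have h3 : HasDerivAt (fun x : ℝ => 1 / (2 * x ^ 2)) _ x :=
        (hasDerivAt_const x 1).fun_div (((hasDerivAt_id x).fun_pow 2).const_mul 2)
          (by simpa using hx0.ne')
      refine h3.fun_neg.congr_deriv ?_
      simp only [id]
      field_simp
      norm_num
    have i3 : IntervalIntegrable (fun x : ℝ => 1 / x ^ 3) volume r s := by
      apply ContinuousOn.intervalIntegrable
      rw [uIcc_of_le hs]
      intro x hx
      have hx0 : x ^ 3 ≠ 0 := (pow_pos (hr.trans_le hx.1) 3).ne'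
      exact (continuousAt_const.div (continuous_pow 3).continuousAt hx0).continuousWithinAt
    have i4 := intervalIntegral.integral_eq_sub_of_hasDerivAt i2 i3
    have i5 : ∫ x in r..s, ((dtu u t x) ^ 2 + (dru u t x) ^ 2) * x ^ 3 ≤ ε ^ 2 := by
      rw [intervalIntegral.integral_of_le hs]
      refine le_trans (setIntegral_mono_set hi ?_ hsub'.eventuallyLE) he
      filter_upwards [ae_restrict_mem measurableSet_Ioi] with x hx
      have : 0 < x := pos_r hR hx
      simp only [Pi.zero_apply]
      positivity
    have i6 : |∫ x in r..s, dru u t x| ≤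
        ∫ x in r..s, ((1 / (2 * r * ε)) * (((dtu u t x) ^ 2 + (dru u t x) ^ 2) * x ^ 3)
          + (r * ε / 2) * (1 / x ^ 3)) := by
      rw [← Real.norm_eq_abs]
      apply intervalIntegral.norm_integral_le_of_norm_le hs
      · refine Eventually.of_forall fun x hx => ?_
        have hx0 : 0 < x := hr.trans hx.1
        have hx3 : 0 < x ^ 3 := by positivity
        rw [Real.norm_eq_abs]
        have hre : 0 < r * ε := by positivity
        have e1 : (1 / (2 * r * ε)) * (((dtu u t x) ^ 2 + (dru u t x) ^ 2) * x ^ 3)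
          + (r * ε / 2) * (1 / x ^ 3) = ((dtu u t x) ^ 2 * x ^ 3) / (2 * (r * ε)) +
            ((|dru u t x| * x ^ 3 - r * ε) ^ 2) / (2 * (r * ε) * x ^ 3) + |dru u t x| := by
          rw [← sq_abs (dru u t x)]
          field_simp
          ring
        rw [e1]
        have : 0 ≤ ((dtu u t x) ^ 2 * x ^ 3) / (2 * (r * ε)) := by positivity
        have : 0 ≤ ((|dru u t x| * x ^ 3 - r * ε) ^ 2) / (2 * (r * ε) * x ^ 3) := by positivity
        linarith
      · exact (i1.const_mul _).add (i3.const_mul _)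
    rw [intervalIntegral.integral_add (i1.const_mul _) (i3.const_mul _),
      intervalIntegral.integral_const_mul, intervalIntegral.integral_const_mul, i4] at i6
    refine i6.trans ?_
    have hs0 : 0 < s := hr.trans_le hs
    have j1 : (1 / (2 * r * ε)) * (∫ x in r..s, ((dtu u t x) ^ 2 + (dru u t x) ^ 2) * x ^ 3) ≤
        (1 / (2 * r * ε)) * ε ^ 2 := by gcongr
    have j2 : (1 / (2 * r * ε)) * ε ^ 2 = ε / r / 2 := by field_simp
    have j3 : (r * ε / 2) * (-(1 / (2 * s ^ 2)) - -(1 / (2 * r ^ 2))) ≤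
        (r * ε / 2) * (1 / (2 * r ^ 2)) := by
      have : 0 < 1 / (2 * s ^ 2) := by positivity
      gcongr; linarith
    have j4 : (r * ε / 2) * (1 / (2 * r ^ 2)) = ε / r / 4 := by field_simp; norm_num
    have j5 : 0 < ε / r := by positivity
    linarith
  by_contra hcon
  push Not at hcon
  set δ := |u t r| - ε / r with hδ
  have hδ0 : 0 < δ := by rw [hδ]; linarith
  have hlow : ∀ s : ℝ, r < s → δ ≤ |u t s| := by
    intro s hs
    have h1 := hinc s hs.le
    have h2 := abs_sub_abs_le_abs_sub (u t r) (u t s)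
    rw [abs_sub_comm] at h2
    linarith
  have : (⊤ : ℝ≥0∞) ≤ ∫⁻ r in Ioi (R + |t|), ENNReal.ofReal (|u t r| ^ (8:ℝ) * r ^ 3) := by
    calc (⊤ : ℝ≥0∞) = ∫⁻ x in Ioi r, ENNReal.ofReal (δ ^ (8:ℝ) * r ^ 3) := by
          rw [setLIntegral_const, Real.volume_Ioi, ENNReal.mul_top]
          have : 0 < δ ^ (8:ℝ) * r ^ 3 := by positivity
          simpa using this
      _ ≤ ∫⁻ x in Ioi r, ENNReal.ofReal (|u t x| ^ (8:ℝ) * x ^ 3) := by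
          apply setLIntegral_mono' measurableSet_Ioi
          intro x hx
          have hx' : r < x := hx
          apply ENNReal.ofReal_le_ofReal
          have := hlow x hx
          gcongr
      _ ≤ _ := lintegral_mono_set (Ioi_subset_Ioi h.le)
  exact absurd hg (not_lt.2 this)

lemma point_all {R : ℝ} (hR : 0 < R) {u : ℝ → ℝ → ℝ} (hu : Sm R u) (hfin1 : eLL 2 8 R u < ⊤)
    (hi : ∀ t, IntegrableOn (fun r => ((dtu u t r) ^ 2 + (dru u t r) ^ 2) * r ^ 3) (Ioi (R + |t|)))
    {t ε : ℝ} (hε : 0 < ε)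
    (he : ∀ᶠ s in 𝓝 t,
      ∫ r in Ioi (R + |s|), ((dtu u s r) ^ 2 + (dru u s r) ^ 2) * r ^ 3 ≤ ε ^ 2)
    {r : ℝ} (h : R + |t| < r) : |u t r| ≤ ε / r := by
  by_contra hcon
  push Not at hcon
  have h1 : ∀ᶠ s in 𝓝 t, ε / r < |u s r| :=
    ((hu.has_t h).continuousAt.abs).eventually_const_lt hcon
  have h2 := (h1.and (he.and (near_t h)))
  obtain ⟨δ, hδ, hb⟩ := Metric.eventually_nhds_iff.1 h2
  obtain ⟨s, hs, hgood⟩ := good_dense (R := R) hfin1 (show t - δ < t + δ by linarith)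
  obtain ⟨k1, k2, k3⟩ := hb (y := s) (by
    rw [Real.dist_eq, abs_lt]; constructor <;> linarith [hs.1, hs.2])
  exact absurd (point_good hR hu hε hgood (hi s) k2 k3) (not_le.2 k1)

lemma from_zero {R : ℝ} {u : ℝ → ℝ → ℝ} (hu : Sm R u) (h0 : ∀ r : ℝ, R < r → u 0 r = 0)
    {t r D : ℝ} (h : R + |t| < r) (hD : ∀ s : ℝ, R + |s| < r → |dtu u s r| ≤ D) :
    |u t r| ≤ D * |t| := by
  have hm : ∀ s ∈ Icc (-|t|) |t|, R + |s| < r := fun s hs => by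
    have := abs_le.2 hs; linarith
  have := Convex.norm_image_sub_le_of_norm_hasDerivWithin_le (f := fun s => u s r)
    (f' := fun s => dtu u s r) (s := Icc (-|t|) |t|) (x := 0) (y := t) (C := D)
    (fun s hs => (hu.has_t (hm s hs)).hasDerivWithinAt) (fun s hs => hD s (hm s hs))
    (convex_Icc _ _) (by simp) ⟨neg_abs_le t, le_abs_self t⟩
  simp only [h0 r (by have := abs_nonneg t; linarith), sub_zero, Real.norm_eq_abs] at this
  exact this

/-- rigidity for odd non-radiative exterior solutions: a smooth
non-radiative exterior solution with data `(0, u₁)`, `u₁ ∈ L²(R)`, vanishes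
identically on `{r > R + |t|}`. -/
theorem stmt12 (p : ℕ) (hodd : Odd p) (hp5 : 5 ≤ p) (R : ℝ) (hR : 0 < R)
    (u : ℝ → ℝ → ℝ) (u₁ : ℝ → ℝ)
    (hsol : IsExtSol p ⊤ R u)
    (hdata0 : ∀ r : ℝ, R < r → u 0 r = 0)
    (hdata1 : ∀ r : ℝ, R < r → dtu u 0 r = u₁ r)
    (hu₁ : (∫⁻ r in Ioi R, ENNReal.ofReal ((u₁ r) ^ 2 * r ^ 3)) < ⊤)
    (hfin1 : eLL 2 8 R u < ⊤) (hfin2 : eLL 3 6 R u < ⊤)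
    (hfin3 : eLL 3 6 R (dtu u) < ⊤)
    (hfin4 : supH R u < ⊤)
    (hvan : ExtEnergyVanishes R u) :
    ∀ t r : ℝ, R + |t| < r → u t r = 0 := by
  have hu : Sm R u := hsol.1
  have hev : Even (p - 1) := by
    obtain ⟨m, hm⟩ := hodd
    exact ⟨m, by omega⟩
  have hpp : p - 1 + 1 = p := by omega
  have hw : Wave R u (fun t r => (u t r) ^ p) := by
    intro t r h
    have := hsol.2 t r h
    rw [hev.pow_abs, ← pow_succ, hpp] at this
    exact this
  obtain ⟨B, hB0, hB⟩ := energy_int hR hu hfin4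
  have hi := fun t => (hB t).1
  have hv1 : Tendsto (fun t : ℝ => ∫ r in Ioi (R + |t|),
      ((dtu u t r) ^ 2 + (dru u t r) ^ 2) * r ^ 3) atTop (nhds 0) := hvan.1
  have hv2 : Tendsto (fun t : ℝ => ∫ r in Ioi (R + |t|),
      ((dtu u t r) ^ 2 + (dru u t r) ^ 2) * r ^ 3) atBot (nhds 0) := hvan.2
  set C := B + 1 with hC
  have hC0 : 0 < C := by linarith
  have hub : ∀ t r : ℝ, R + |t| < r → |u t r| ≤ C / r := by
    intro t r h
    refine point_all hR hu hfin1 hi hC0 (Eventually.of_forall fun s => (hB s).2.trans ?_) h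
    nlinarith
  set K := C ^ (p - 1) / R ^ (p - 5) with hK
  have hK0 : 0 < K := by positivity
  have hpot : ∀ t r : ℝ, R + |t| < r → |u t r| ^ (p - 1) ≤ K / r ^ 4 := by
    intro t r h
    have hr := pos_r hR h
    have hRr : R ≤ r := by have := abs_nonneg t; linarith
    calc |u t r| ^ (p - 1) ≤ (C / r) ^ (p - 1) := by gcongr; exact hub t r h
      _ = C ^ (p - 1) / (r ^ (p - 5) * r ^ 4) := by
          rw [div_pow, ← pow_add]; congr 2; omega
      _ ≤ C ^ (p - 1) / (R ^ (p - 5) * r ^ 4) := by gcongr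
      _ = K / r ^ 4 := by rw [hK, div_div]
  set c := 3 / 4 + K / R ^ 2 with hc
  have hc0 : 0 < c := by positivity
  have hsrc : ∀ κ : ℝ, ∀ t r : ℝ, R + |t| < r → |u t r| ≤ κ / r →
      |(3 / 4) / √r * u t r - r * √r * (u t r) ^ p| ≤ κ * c / (r * √r) := by
    intro κ t r h hk
    have hr := pos_r hR h
    have hs : 0 < √r := Real.sqrt_pos.2 hr
    have es : r = √r ^ 2 := (Real.sq_sqrt hr.le).symm
    have hRr : R ≤ r := by have := abs_nonneg t; linarith
    have hκ : 0 ≤ κ / r := (abs_nonneg _).trans hk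
    have hκ0 : 0 ≤ κ := by
      have := mul_nonneg hκ hr.le
      rwa [div_mul_cancel₀ _ hr.ne'] at this
    refine (abs_sub _ _).trans ?_
    have hup : |u t r ^ p| = |u t r| ^ (p - 1) * |u t r| := by
      rw [abs_pow, ← pow_succ, hpp]
    rw [abs_mul, abs_mul, abs_of_pos (by positivity : 0 < 3 / 4 / √r),
      abs_of_pos (by positivity : 0 < r * √r), hup]
    have a1 : 3 / 4 / √r * |u t r| ≤ 3 / 4 / √r * (κ / r) := by gcongr
    have a2 : r * √r * (|u t r| ^ (p - 1) * |u t r|) ≤ r * √r * (K / r ^ 4 * (κ / r)) := by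
      gcongr
      exact hpot t r h
    have a3 : r * √r * (K / r ^ 4 * (κ / r)) = κ * (K / r ^ 2) / (r * √r) := by
      generalize √r = Q at *
      rw [es]; field_simp
    have a4 : κ * (K / r ^ 2) / (r * √r) ≤ κ * (K / R ^ 2) / (r * √r) := by gcongr
    have a5 : κ * c / (r * √r) = 3 / 4 / √r * (κ / r) + κ * (K / R ^ 2) / (r * √r) := by
      rw [hc]; field_simp
    linarith
  have hut : ∀ κ r₀ : ℝ, 0 ≤ κ → (∀ t r : ℝ, R + |t| < r → r₀ ≤ r → |u t r| ≤ κ / r) →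
      ∀ t r : ℝ, R + |t| < r → r₀ ≤ r → |dtu u t r| ≤ 2 * (κ * c) / r ^ 2 := by
    intro κ r₀ hκ hb t r h h0
    exact dtu_bound hR hu hw (by positivity) hC0.le
      (fun t r h h0 => hsrc κ t r h (hb t r h h0)) hub hi hv1 hv2 h h0
  have hut1 : ∀ t r : ℝ, R + |t| < r → |dtu u t r| ≤ 2 * (C * c) / r ^ 2 :=
    fun t r h => hut C 0 hC0.le (fun t r h _ => hub t r h) t r h (pos_r hR h).le
  have hut2 : ∀ t r : ℝ, R + |t| < r → |u t r| ≤ 2 * (C * c) / r ^ 2 * |t| :=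
    fun t r h => from_zero hu hdata0 h (fun s hs => hut1 s r hs)
  -- uniform smallness
  have hsmall : ∀ ε : ℝ, 0 < ε → ∃ ρ : ℝ, ∀ t r : ℝ, R + |t| < r → ρ ≤ r → |u t r| ≤ ε / r := by
    intro ε hε
    have e2 : 0 < ε ^ 2 := by positivity
    obtain ⟨T1, hT1⟩ := eventually_atTop.1 (hv1.eventually_lt_const e2)
    obtain ⟨T2, hT2⟩ := eventually_atBot.1 (hv2.eventually_lt_const e2)
    set T := max 0 (max T1 (-T2)) with hT
    have hT0 : 0 ≤ T := le_max_left _ _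
    have hTa : T1 ≤ T := (le_max_left _ _).trans (le_max_right _ _)
    have hTb : -T2 ≤ T := (le_max_right _ _).trans (le_max_right _ _)
    refine ⟨2 * (C * c) * T / ε, fun t r h hr0 => ?_⟩
    have hr := pos_r hR h
    by_cases ht : |t| ≤ T
    · refine (hut2 t r h).trans ?_
      rw [div_le_iff₀ hε] at hr0
      have : 2 * (C * c) * |t| ≤ r * ε := by
        refine le_trans ?_ hr0
        gcongr
      rw [div_mul_eq_mul_div, div_le_div_iff₀ (by positivity) hr]
      nlinarith
    · push Not at ht
      refine point_all hR hu hfin1 hi hε ?_ h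
      have : ∀ᶠ s in nhds t, T < |s| := continuous_abs.continuousAt.eventually_const_lt ht
      filter_upwards [this] with s hs
      rcases lt_abs.1 hs with h1 | h1
      · exact (hT1 s (by linarith)).le
      · exact (hT2 s (by linarith)).le
  have hzero : ∀ t r : ℝ, R + |t| < r → dtu u t r = 0 := by
    refine barrier hR hu.dtu (P := fun t r => p * (u t r) ^ (p - 1)) (Wave.dt hu hw)
      (k := p * K + 1) (by positivity) ?_ ?_
    · intro t r h
      have hr := pos_r hR h
      rw [abs_mul, abs_pow, Nat.abs_cast]
      calc (p:ℝ) * |u t r| ^ (p - 1) ≤ p * (K / r ^ 4) := by gcongr; exact hpot t r h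
        _ = (p * K) / r ^ 4 := by ring
        _ ≤ (p * K + 1) ^ 2 / r ^ 4 := by
          have : 0 ≤ (p:ℝ) * K := by positivity
          gcongr
          nlinarith
    · intro ε hε
      obtain ⟨ρ, hρ⟩ := hsmall (ε / (2 * c)) (by positivity)
      refine ⟨ρ, fun t r h h0 => ?_⟩
      have hr := pos_r hR h
      have := hut _ ρ (by positivity) hρ t r h h0
      rw [le_div_iff₀ (by positivity)] at this
      have e : 2 * (ε / (2 * c) * c) = ε := by field_simp
      linarith
  intro t r h
  have := from_zero hu hdata0 (D := 0) h (fun s hs => by rw [hzero s r hs]; simp)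
  simpa using this
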